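/- arXiv:1511.05321 — 3 statements merged into one kernel-verified Lean document; each statement's English description precedes it below -/
import Mathlib

section
/- Let q₀ be a positive real number and μ ∈ ℂ with Re μ > 0, and assume θ₂(iν) ≠ 0, θ₃(iν) ≠ 0 and θ₄(iν) ≠ 0 for every ν with Re ν > 0. Then: w₂[q₀](i/μ) = −μ² w₂[1/q₀](iμ); w₂'[q₀](i/μ) = μ⁴ w₂'[1/q₀](iμ) + 2μ³ w₂[1/q₀](iμ); w₂''[q₀](i/μ) = −μ⁶ w₂''[1/q₀](iμ) − 6μ⁵ w₂'[1/q₀](iμ) − 6μ⁴ w₂[1/q₀](iμ); w₂⁽³⁾[q₀](i/μ) = μ⁸ w₂⁽³⁾[1/q₀](iμ) + 12μ⁷ w₂''[1/q₀](iμ) + 36μ⁶ w₂'[1/q₀](iμ) + 24μ⁵ w₂[1/q₀](iμ); w₂⁽⁴⁾[q₀](i/μ) = −μ¹⁰ w₂⁽⁴⁾[1/q₀](iμ) − 20μ⁹ w₂⁽³⁾[1/q₀](iμ) − 120μ⁸ w₂''[1/q₀](iμ) − 240μ⁷ w₂'[1/q₀](iμ) − 120μ⁶ w₂[1/q₀](iμ).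 -/
noncomputable section

/-- The theta function with characteristics `θ[p,q](iμ)`. -/
def theta (p q μ : ℂ) : ℂ :=
  ∑' m : ℤ, Complex.exp (-(Real.pi : ℂ) * ((m : ℂ) + p) ^ 2 * μ +
    2 * (Real.pi : ℂ) * Complex.I * ((m : ℂ) + p) * q)

/-- The characteristic derivative `∂qθ[p,q](iμ)`. -/
def thetaQ (p q μ : ℂ) : ℂ :=
  2 * (Real.pi : ℂ) * Complex.I *
    ∑' m : ℤ, ((m : ℂ) + p) * Complex.exp (-(Real.pi : ℂ) * ((m : ℂ) + p) ^ 2 * μ +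
      2 * (Real.pi : ℂ) * Complex.I * ((m : ℂ) + p) * q)

/-- The n-th μ-derivative `∂μⁿθ[p,q](iμ)`, given by its absolutely convergent series. -/
def thetaD (n : ℕ) (p q μ : ℂ) : ℂ :=
  (-(Real.pi : ℂ)) ^ n *
    ∑' m : ℤ, ((m : ℂ) + p) ^ (2 * n) *
      Complex.exp (-(Real.pi : ℂ) * ((m : ℂ) + p) ^ 2 * μ +
        2 * (Real.pi : ℂ) * Complex.I * ((m : ℂ) + p) * q)

/-- The n-th μ-derivative `∂μⁿ∂qθ[p,q](iμ)`, given by its absolutely convergent series. -/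
def thetaQD (n : ℕ) (p q μ : ℂ) : ℂ :=
  2 * Complex.I * (-1 : ℂ) ^ n * (Real.pi : ℂ) ^ (n + 1) *
    ∑' m : ℤ, ((m : ℂ) + p) ^ (2 * n + 1) *
      Complex.exp (-(Real.pi : ℂ) * ((m : ℂ) + p) ^ 2 * μ +
        2 * (Real.pi : ℂ) * Complex.I * ((m : ℂ) + p) * q)

/-- The constant `C(j|n) = (−i)ⁿ n! / (2ʲ (n−2j)! (2j)!!)` with `(2j)!! = 2ʲ j!`. -/
def Ccoef (j n : ℕ) : ℂ :=
  (-Complex.I) ^ n * (n.factorial : ℂ) /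
    ((2 : ℂ) ^ j * ((n - 2 * j).factorial : ℂ) * ((2 : ℂ) ^ j * (j.factorial : ℂ)))

/-- `w₁[p,q](iμ)` of the two-parametric family. -/
def w1 (p q μ : ℂ) : ℂ :=
  -(Complex.I / 2) * theta 0 0 μ * theta 0 (1 / 2) μ * thetaQ p (q + 1 / 2) μ /
    (Complex.exp ((Real.pi : ℂ) * Complex.I * p) * theta p q μ)

/-- `w₂[p,q](iμ)` of the two-parametric family. -/
def w2 (p q μ : ℂ) : ℂ :=
  (Complex.I / 2) * theta (1 / 2) 0 μ * theta 0 (1 / 2) μ *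
    thetaQ (p + 1 / 2) (q + 1 / 2) μ /
    (Complex.exp ((Real.pi : ℂ) * Complex.I * p) * theta p q μ)

/-- `w₃[p,q](iμ)` of the two-parametric family. -/
def w3 (p q μ : ℂ) : ℂ :=
  -(1 / 2 : ℂ) * theta (1 / 2) 0 μ * theta 0 0 μ * thetaQ (p + 1 / 2) q μ / theta p q μ

/-- The conformal factor `F[p,q](iμ)` of the two-parametric family. -/
def Ftwo (Λ p q μ : ℂ) : ℂ :=
  (2 / ((Real.pi : ℂ) * Λ)) * (theta p q μ / thetaQ p q μ) ^ 2

/-- `w₁[q₀](iμ)` of the one-parametric family. -/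
def v1 (q0 μ : ℂ) : ℂ := 1 / (μ + q0) + 2 * thetaD 1 (1 / 2) 0 μ / theta (1 / 2) 0 μ

/-- `w₂[q₀](iμ)` of the one-parametric family. -/
def v2 (q0 μ : ℂ) : ℂ := 1 / (μ + q0) + 2 * thetaD 1 0 0 μ / theta 0 0 μ

/-- `w₃[q₀](iμ)` of the one-parametric family. -/
def v3 (q0 μ : ℂ) : ℂ := 1 / (μ + q0) + 2 * thetaD 1 0 (1 / 2) μ / theta 0 (1 / 2) μ

/-- The conformal factor `F[q₀](iμ) = C(μ+q₀)²` of the one-parametric family. -/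
def Fone (C q0 μ : ℂ) : ℂ := C * (μ + q0) ^ 2

/-- The Seeley–de Witt coefficient `ã₀[p,q](iμ)` of the two-parametric family. -/
def a0two (Λ p q μ : ℂ) : ℂ :=
  4 * Ftwo Λ p q μ ^ 2 * w1 p q μ * w2 p q μ * w3 p q μ

/-- The Seeley–de Witt coefficient `ã₀[q₀](iμ)` of the one-parametric family. -/
def a0one (C q0 μ : ℂ) : ℂ :=
  4 * Fone C q0 μ ^ 2 * v1 q0 μ * v2 q0 μ * v3 q0 μ

/-- The Seeley–de Witt coefficient `ã₂[p,q](iμ)` of the two-parametric family. -/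
def a2two (Λ p q μ : ℂ) : ℂ :=
  -(Ftwo Λ p q μ / 3) * (w1 p q μ ^ 2 + w2 p q μ ^ 2 + w3 p q μ ^ 2) +
  (Ftwo Λ p q μ / 6) *
    ((w1 p q μ ^ 2 * w2 p q μ ^ 2 - deriv (w3 p q) μ ^ 2) / w3 p q μ ^ 2 +
     (w1 p q μ ^ 2 * w3 p q μ ^ 2 - deriv (w2 p q) μ ^ 2) / w2 p q μ ^ 2 +
     (w2 p q μ ^ 2 * w3 p q μ ^ 2 - deriv (w1 p q) μ ^ 2) / w1 p q μ ^ 2) -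
  (Ftwo Λ p q μ / 3) *
    (deriv (w1 p q) μ * deriv (w2 p q) μ / (w1 p q μ * w2 p q μ) +
     deriv (w1 p q) μ * deriv (w3 p q) μ / (w1 p q μ * w3 p q μ) +
     deriv (w2 p q) μ * deriv (w3 p q) μ / (w2 p q μ * w3 p q μ)) +
  (Ftwo Λ p q μ / 3) *
    (iteratedDeriv 2 (w1 p q) μ / w1 p q μ + iteratedDeriv 2 (w2 p q) μ / w2 p q μ +
     iteratedDeriv 2 (w3 p q) μ / w3 p q μ) -
  deriv (Ftwo Λ p q) μ ^ 2 / (2 * Ftwo Λ p q μ) + iteratedDeriv 2 (Ftwo Λ p q) μ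


open Complex in
lemma aux_theta_eq (ν : ℂ) : theta 0 0 ν = jacobiTheta₂ 0 (I * ν) := by
  unfold theta jacobiTheta₂ jacobiTheta₂_term
  refine tsum_congr fun m => ?_
  congr 1
  have : I * I = -1 := I_mul_I
  linear_combination (-(Real.pi : ℂ) * m ^ 2 * ν) * this

open Complex in
lemma aux_theta_fun {ν : ℂ} (hν : 0 < ν.re) :
    theta 0 0 (1 / ν) = ν ^ (1 / 2 : ℂ) * theta 0 0 ν := by
  have hν0 : ν ≠ 0 := by rintro rfl; simp at hν
  rw [aux_theta_eq, aux_theta_eq, jacobiTheta₂_functional_equation 0 (I * ν)]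
  have e1 : -I * (I * ν) = ν := by
    linear_combination (-ν) * I_mul_I
  have e2 : -1 / (I * ν) = I * (1 / ν) := by
    field_simp
    simp
  have e3 : ν ^ (1 / 2 : ℂ) ≠ 0 := by
    rw [Ne, cpow_eq_zero_iff]; tauto
  rw [e1, e2]
  simp only [zero_div, ne_eq, OfNat.ofNat_ne_zero, not_false_eq_true, zero_pow, mul_zero,
    Complex.exp_zero, mul_one]
  rw [← mul_assoc, mul_one_div_cancel e3, one_mul]

open Complex in
lemma aux_theta_diff {ν : ℂ} (hν : 0 < ν.re) : DifferentiableAt ℂ (theta 0 0) ν := by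
  have h : theta 0 0 = (fun x => jacobiTheta₂ 0 x) ∘ (fun x => I * x) := by
    funext x; exact aux_theta_eq x
  rw [h]
  exact (differentiableAt_jacobiTheta₂_snd 0 (by simpa using hν)).comp ν (by fun_prop)

open Complex in
lemma aux_theta_deriv {ν : ℂ} (hν : 0 < ν.re) : deriv (theta 0 0) ν = thetaD 1 0 0 ν := by
  obtain ⟨T, hT, hTν⟩ := exists_between hν
  have hU : IsOpen {z : ℂ | T < z.re} := isOpen_lt continuous_const continuous_re
  have hs := summable_pow_mul_jacobiTheta₂_term_bound 0 hT 0
  have := hasSum_deriv_of_summable_norm (U := {z : ℂ | T < z.re})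
    (F := fun (m : ℤ) (μ : ℂ) => Complex.exp (-(Real.pi : ℂ) * ((m : ℂ) + 0) ^ 2 * μ +
    2 * (Real.pi : ℂ) * Complex.I * ((m : ℂ) + 0) * 0)) (z := ν) hs
    (fun i => by fun_prop) hU (fun m w hw => by
      rw [Complex.norm_exp]
      have e : (-(Real.pi : ℂ) * ((m : ℂ) + 0) ^ 2 * w +
        2 * (Real.pi : ℂ) * Complex.I * ((m : ℂ) + 0) * 0) =
        ((-Real.pi * (m : ℝ) ^ 2 : ℝ) : ℂ) * w := by push_cast; ring
      rw [e, re_ofReal_mul, pow_zero, one_mul, Real.exp_le_exp]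
      have : 0 ≤ Real.pi * (m : ℝ) ^ 2 * (w.re - T) :=
        mul_nonneg (by positivity) (sub_nonneg.2 (le_of_lt hw))
      linarith) hTν
  have h2 := this.tsum_eq
  unfold thetaD
  rw [← tsum_mul_left]
  refine Eq.trans h2.symm (tsum_congr fun m => ?_)
  have hd : HasDerivAt (fun μ : ℂ => Complex.exp (-(Real.pi : ℂ) * ((m : ℂ) + 0) ^ 2 * μ +
    2 * (Real.pi : ℂ) * Complex.I * ((m : ℂ) + 0) * 0)) _ ν :=
    ((((hasDerivAt_id ν).const_mul (-(Real.pi : ℂ) * ((m : ℂ) + 0) ^ 2)).add_const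
      (2 * (Real.pi : ℂ) * Complex.I * ((m : ℂ) + 0) * 0))).cexp
  rw [hd.deriv]
  simp only [id]
  ring

lemma aux_re {ν : ℂ} (hν : 0 < ν.re) : 0 < (1 / ν).re := by
  have hν0 : ν ≠ 0 := by rintro rfl; simp at hν
  rw [one_div, Complex.inv_re]
  exact div_pos hν (Complex.normSq_pos.2 hν0)

lemma aux_open : IsOpen {z : ℂ | 0 < z.re} := isOpen_lt continuous_const Complex.continuous_re

lemma aux_inv {ν : ℂ} (hν0 : ν ≠ 0) : HasDerivAt (fun z : ℂ => 1 / z) (-1 / ν ^ 2) ν := by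
  have := hasDerivAt_inv hν0
  simp only [one_div]
  rw [neg_div, one_div]
  exact this

/-- differentiating an identity `F (1/z) = G z` on the half plane -/
lemma aux_step {F G : ℂ → ℂ} {F' G' : ℂ} {ν : ℂ} (hν : 0 < ν.re)
    (h : ∀ z : ℂ, 0 < z.re → F (1 / z) = G z) (hF : HasDerivAt F F' (1 / ν))
    (hG : HasDerivAt G G' ν) : F' = -ν ^ 2 * G' := by
  have hν0 : ν ≠ 0 := by rintro rfl; simp at hν
  have h1 := hF.comp ν (aux_inv hν0)
  have h2 : (F ∘ fun z : ℂ => 1 / z) =ᶠ[nhds ν] G := by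
    filter_upwards [aux_open.mem_nhds hν] with z hz using h z hz
  have h3 := h1.unique (hG.congr_of_eventuallyEq h2)
  rw [← h3]
  field_simp

lemma aux_add_ne {q0 : ℝ} (hq0 : 0 < q0) {ν : ℂ} (hν : 0 < ν.re) : ν + (q0 : ℂ) ≠ 0 := by
  intro h
  have := congrArg Complex.re h
  simp at this
  linarith

lemma aux_v2_zero {q0 : ℝ} (hq0 : 0 < q0) {μ : ℂ} (hμ : 0 < μ.re)
    (h3 : ∀ ν : ℂ, 0 < ν.re → theta 0 0 ν ≠ 0) :
    v2 (q0 : ℂ) (1 / μ) = -μ ^ 2 * v2 (1 / (q0 : ℂ)) μ := by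
  have hμ0 : μ ≠ 0 := by rintro rfl; simp at hμ
  have hs : HasDerivAt (fun z : ℂ => z ^ (1 / 2 : ℂ)) ((1 / 2) * μ ^ ((1 / 2 : ℂ) - 1) * 1) μ :=
    (hasDerivAt_id μ).cpow_const (Or.inl hμ)
  have hst := aux_step hμ (fun z hz => aux_theta_fun hz)
    (aux_theta_diff (aux_re hμ)).hasDerivAt (hs.mul (aux_theta_diff hμ).hasDerivAt)
  rw [aux_theta_deriv hμ, aux_theta_deriv (aux_re hμ), Complex.cpow_sub _ _ hμ0,
    Complex.cpow_one] at hst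
  have e3 : μ ^ (1 / 2 : ℂ) ≠ 0 := by
    rw [Ne, Complex.cpow_eq_zero_iff]; tauto
  have hq : (q0 : ℂ) ≠ 0 := by exact_mod_cast hq0.ne'
  have ha : 1 / μ + (q0 : ℂ) ≠ 0 := aux_add_ne hq0 (aux_re hμ)
  have ha' : 1 + μ * (q0 : ℂ) ≠ 0 := by
    intro h; apply ha; field_simp; simpa using h
  have hb : μ + 1 / (q0 : ℂ) ≠ 0 := by
    have := aux_add_ne (inv_pos.2 hq0) hμ
    simpa using this
  have hb' : μ * (q0 : ℂ) + 1 ≠ 0 := by rwa [add_comm]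
  have ht := h3 μ hμ
  unfold v2
  rw [hst, aux_theta_fun hμ]
  generalize μ ^ (1 / 2 : ℂ) = s at *
  generalize thetaD 1 0 0 μ = d at *
  generalize theta 0 0 μ = t at *
  have k1 : 1 / (1 / μ + (q0 : ℂ)) = μ / (1 + μ * q0) := by field_simp
  have k2 : 1 / (μ + 1 / (q0 : ℂ)) = q0 / (1 + μ * q0) := by
    rw [add_comm 1]; field_simp
  rw [k1, k2]
  field_simp
  ring

lemma aux_v2_an (q0 : ℝ) (hq0 : 0 < q0) (h3 : ∀ ν : ℂ, 0 < ν.re → theta 0 0 ν ≠ 0) :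
    AnalyticOnNhd ℂ (v2 (q0 : ℂ)) {z : ℂ | 0 < z.re} := by
  have ht : AnalyticOnNhd ℂ (theta 0 0) {z : ℂ | 0 < z.re} :=
    DifferentiableOn.analyticOnNhd
      (fun z hz => (aux_theta_diff hz).differentiableWithinAt) aux_open
  have hd : AnalyticOnNhd ℂ (thetaD 1 0 0) {z : ℂ | 0 < z.re} :=
    ht.deriv.congr aux_open (fun z hz => aux_theta_deriv hz)
  have h1 : AnalyticOnNhd ℂ (fun z : ℂ => 1 / (z + q0)) {z : ℂ | 0 < z.re} :=
    analyticOnNhd_const.div (analyticOnNhd_id.add analyticOnNhd_const)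
      (fun z hz => aux_add_ne hq0 hz)
  exact h1.add ((analyticOnNhd_const.mul hd).div ht h3)

lemma aux_iter {f : ℂ → ℂ} (hf : AnalyticOnNhd ℂ f {z : ℂ | 0 < z.re}) (n : ℕ) {z : ℂ}
    (hz : 0 < z.re) : HasDerivAt (iteratedDeriv n f) (iteratedDeriv (n + 1) f z) z := by
  rw [iteratedDeriv_succ]
  have := hf.iterated_deriv n
  rw [← iteratedDeriv_eq_iterate] at this
  exact (this z hz).differentiableAt.hasDerivAt

lemma aux_pow (c : ℂ) (n : ℕ) {f : ℂ → ℂ} {f' z : ℂ} (hf : HasDerivAt f f' z) :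
    HasDerivAt (fun z => c * z ^ n * f z) (c * (n * z ^ (n - 1)) * f z + c * z ^ n * f') z :=
  ((hasDerivAt_pow n z).const_mul c).mul hf

lemma aux_main {f g : ℂ → ℂ} (hf : AnalyticOnNhd ℂ f {z : ℂ | 0 < z.re})
    (hg : AnalyticOnNhd ℂ g {z : ℂ | 0 < z.re})
    (h : ∀ z : ℂ, 0 < z.re → f (1 / z) = -z ^ 2 * g z) :
    (∀ z : ℂ, 0 < z.re → iteratedDeriv 1 f (1 / z) =
        z ^ 4 * iteratedDeriv 1 g z + 2 * z ^ 3 * g z) ∧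
    (∀ z : ℂ, 0 < z.re → iteratedDeriv 2 f (1 / z) =
        -z ^ 6 * iteratedDeriv 2 g z - 6 * z ^ 5 * iteratedDeriv 1 g z - 6 * z ^ 4 * g z) ∧
    (∀ z : ℂ, 0 < z.re → iteratedDeriv 3 f (1 / z) =
        z ^ 8 * iteratedDeriv 3 g z + 12 * z ^ 7 * iteratedDeriv 2 g z +
        36 * z ^ 6 * iteratedDeriv 1 g z + 24 * z ^ 5 * g z) ∧
    (∀ z : ℂ, 0 < z.re → iteratedDeriv 4 f (1 / z) =
        -z ^ 10 * iteratedDeriv 4 g z - 20 * z ^ 9 * iteratedDeriv 3 g z -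
        120 * z ^ 8 * iteratedDeriv 2 g z - 240 * z ^ 7 * iteratedDeriv 1 g z -
        120 * z ^ 6 * g z) := by
  have g0 : ∀ z : ℂ, 0 < z.re → HasDerivAt g (iteratedDeriv 1 g z) z := fun z hz => by
    simpa using aux_iter hg 0 hz
  have g1 : ∀ z : ℂ, 0 < z.re → HasDerivAt (iteratedDeriv 1 g) (iteratedDeriv 2 g z) z :=
    fun z hz => aux_iter hg 1 hz
  have g2 : ∀ z : ℂ, 0 < z.re → HasDerivAt (iteratedDeriv 2 g) (iteratedDeriv 3 g z) z :=
    fun z hz => aux_iter hg 2 hz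
  have g3 : ∀ z : ℂ, 0 < z.re → HasDerivAt (iteratedDeriv 3 g) (iteratedDeriv 4 g z) z :=
    fun z hz => aux_iter hg 3 hz
  have f0 : ∀ z : ℂ, 0 < z.re → HasDerivAt f (iteratedDeriv 1 f z) z := fun z hz => by
    simpa using aux_iter hf 0 hz
  have s1 : ∀ z : ℂ, 0 < z.re → iteratedDeriv 1 f (1 / z) =
        z ^ 4 * iteratedDeriv 1 g z + 2 * z ^ 3 * g z := fun z hz => by
    rw [aux_step hz (G := fun z => (-1) * z ^ 2 * g z) (fun w hw => by rw [h w hw]; ring)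
      (f0 _ (aux_re hz)) (aux_pow (-1) 2 (g0 z hz))]
    push_cast
    ring
  have s2 : ∀ z : ℂ, 0 < z.re → iteratedDeriv 2 f (1 / z) =
        -z ^ 6 * iteratedDeriv 2 g z - 6 * z ^ 5 * iteratedDeriv 1 g z - 6 * z ^ 4 * g z :=
      fun z hz => by
    rw [aux_step hz (G := fun z => 1 * z ^ 4 * iteratedDeriv 1 g z + 2 * z ^ 3 * g z)
      (fun w hw => by rw [s1 w hw]; ring)
      (aux_iter hf 1 (aux_re hz))
      ((aux_pow 1 4 (g1 z hz)).add (aux_pow 2 3 (g0 z hz)))]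
    push_cast
    ring
  have s3 : ∀ z : ℂ, 0 < z.re → iteratedDeriv 3 f (1 / z) =
        z ^ 8 * iteratedDeriv 3 g z + 12 * z ^ 7 * iteratedDeriv 2 g z +
        36 * z ^ 6 * iteratedDeriv 1 g z + 24 * z ^ 5 * g z := fun z hz => by
    rw [aux_step hz (G := fun z => (-1) * z ^ 6 * iteratedDeriv 2 g z +
        (-6) * z ^ 5 * iteratedDeriv 1 g z + (-6) * z ^ 4 * g z)
      (fun w hw => by rw [s2 w hw]; ring)
      (aux_iter hf 2 (aux_re hz))
      (((aux_pow (-1) 6 (g2 z hz)).add (aux_pow (-6) 5 (g1 z hz))).add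
        (aux_pow (-6) 4 (g0 z hz)))]
    push_cast
    ring
  refine ⟨s1, s2, s3, fun z hz => ?_⟩
  rw [aux_step hz (G := fun z => 1 * z ^ 8 * iteratedDeriv 3 g z +
        12 * z ^ 7 * iteratedDeriv 2 g z + 36 * z ^ 6 * iteratedDeriv 1 g z + 24 * z ^ 5 * g z)
      (fun w hw => by rw [s3 w hw]; ring)
      (aux_iter hf 3 (aux_re hz))
      ((((aux_pow 1 8 (g3 z hz)).add (aux_pow 12 7 (g2 z hz))).add
        (aux_pow 36 6 (g1 z hz))).add (aux_pow 24 5 (g0 z hz)))]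
  push_cast
  ring

/-- Lemma 6.3: behavior of `w₂[q₀]` and its μ-derivatives up to order 4 under
`iμ ↦ i/μ`, expressed through `w₂[1/q₀]`. -/
theorem statement13 (q0 : ℝ) (hq0 : 0 < q0) (μ : ℂ) (hμ : 0 < μ.re)
    (h2 : ∀ ν : ℂ, 0 < ν.re → theta (1 / 2) 0 ν ≠ 0)
    (h3 : ∀ ν : ℂ, 0 < ν.re → theta 0 0 ν ≠ 0)
    (h4 : ∀ ν : ℂ, 0 < ν.re → theta 0 (1 / 2) ν ≠ 0) :
    v2 (q0 : ℂ) (1 / μ) = -μ ^ 2 * v2 (1 / (q0 : ℂ)) μ ∧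
    iteratedDeriv 1 (v2 (q0 : ℂ)) (1 / μ) =
        μ ^ 4 * iteratedDeriv 1 (v2 (1 / (q0 : ℂ))) μ + 2 * μ ^ 3 * v2 (1 / (q0 : ℂ)) μ ∧
    iteratedDeriv 2 (v2 (q0 : ℂ)) (1 / μ) =
        -μ ^ 6 * iteratedDeriv 2 (v2 (1 / (q0 : ℂ))) μ -
          6 * μ ^ 5 * iteratedDeriv 1 (v2 (1 / (q0 : ℂ))) μ - 6 * μ ^ 4 * v2 (1 / (q0 : ℂ)) μ ∧
    iteratedDeriv 3 (v2 (q0 : ℂ)) (1 / μ) =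
        μ ^ 8 * iteratedDeriv 3 (v2 (1 / (q0 : ℂ))) μ +
          12 * μ ^ 7 * iteratedDeriv 2 (v2 (1 / (q0 : ℂ))) μ +
          36 * μ ^ 6 * iteratedDeriv 1 (v2 (1 / (q0 : ℂ))) μ + 24 * μ ^ 5 * v2 (1 / (q0 : ℂ)) μ ∧
    iteratedDeriv 4 (v2 (q0 : ℂ)) (1 / μ) =
        -μ ^ 10 * iteratedDeriv 4 (v2 (1 / (q0 : ℂ))) μ -
          20 * μ ^ 9 * iteratedDeriv 3 (v2 (1 / (q0 : ℂ))) μ -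
          120 * μ ^ 8 * iteratedDeriv 2 (v2 (1 / (q0 : ℂ))) μ -
          240 * μ ^ 7 * iteratedDeriv 1 (v2 (1 / (q0 : ℂ))) μ -
          120 * μ ^ 6 * v2 (1 / (q0 : ℂ)) μ := by
  have hz : ∀ z : ℂ, 0 < z.re → v2 (q0 : ℂ) (1 / z) = -z ^ 2 * v2 (1 / (q0 : ℂ)) z :=
    fun z hz => aux_v2_zero hq0 hz h3
  have hg : AnalyticOnNhd ℂ (v2 (1 / (q0 : ℂ))) {z : ℂ | 0 < z.re} := by
    simpa using aux_v2_an q0⁻¹ (inv_pos.2 hq0) h3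
  obtain ⟨a, b, c, d⟩ := aux_main (aux_v2_an q0 hq0 h3) hg hz
  exact ⟨hz μ hμ, a μ hμ, b μ hμ, c μ hμ, d μ hμ⟩

end
end

section
/- Let q₀ be a positive real number and μ ∈ ℂ with Re μ > 0, and assume θ₂(iν) ≠ 0, θ₃(iν) ≠ 0 and θ₄(iν) ≠ 0 for every ν with Re ν > 0. Then: w₃[q₀](i/μ) = −μ² w₁[1/q₀](iμ); w₃'[q₀](i/μ) = μ⁴ w₁'[1/q₀](iμ) + 2μ³ w₁[1/q₀](iμ); w₃''[q₀](i/μ) = −μ⁶ w₁''[1/q₀](iμ) − 6μ⁵ w₁'[1/q₀](iμ) − 6μ⁴ w₁[1/q₀](iμ); w₃⁽³⁾[q₀](i/μ) = μ⁸ w₁⁽³⁾[1/q₀](iμ) + 12μ⁷ w₁''[1/q₀](iμ) + 36μ⁶ w₁'[1/q₀](iμ) + 24μ⁵ w₁[1/q₀](iμ); w₃⁽⁴⁾[q₀](i/μ) = −μ¹⁰ w₁⁽⁴⁾[1/q₀](iμ) − 20μ⁹ w₁⁽³⁾[1/q₀](iμ) − 120μ⁸ w₁''[1/q₀](iμ)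 − 240μ⁷ w₁'[1/q₀](iμ) − 120μ⁶ w₁[1/q₀](iμ). -/
noncomputable section

section Helpers
open Complex

/-- The general term of the theta series. -/
def thTerm (p q : ℂ) (m : ℤ) (μ : ℂ) : ℂ :=
  Complex.exp (-(Real.pi : ℂ) * ((m : ℂ) + p) ^ 2 * μ +
    2 * (Real.pi : ℂ) * Complex.I * ((m : ℂ) + p) * q)

lemma thTerm_eq (p q : ℂ) (m : ℤ) (μ : ℂ) :
    thTerm p q m μ = Complex.exp (-(Real.pi : ℂ) * p ^ 2 * μ +
      2 * (Real.pi : ℂ) * Complex.I * p * q) * jacobiTheta₂_term m (q + I * μ * p) (I * μ) := by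
  rw [thTerm, jacobiTheta₂_term, ← Complex.exp_add]
  congr 1
  linear_combination (-2 * (Real.pi : ℂ) * m * μ * p - Real.pi * m ^ 2 * μ) * I_sq

lemma theta_eq (p q : ℂ) (μ : ℂ) :
    theta p q μ = Complex.exp (-(Real.pi : ℂ) * p ^ 2 * μ +
      2 * (Real.pi : ℂ) * Complex.I * p * q) * jacobiTheta₂ (q + I * μ * p) (I * μ) := by
  rw [jacobiTheta₂, ← tsum_mul_left]
  exact tsum_congr fun m => thTerm_eq p q m μ

lemma summable_thTerm (p q : ℂ) (μ : ℂ) (hμ : 0 < μ.re) :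
    Summable (fun m => thTerm p q m μ) := by
  simp_rw [thTerm_eq]
  apply Summable.mul_left
  rw [summable_jacobiTheta₂_term_iff]
  simpa using hμ

lemma norm_thTerm (p q : ℝ) (m : ℤ) (μ : ℂ) :
    ‖thTerm p q m μ‖ = Real.exp (-Real.pi * (m + p) ^ 2 * μ.re) := by
  rw [thTerm, Complex.norm_exp]
  congr 1
  have : (-(Real.pi : ℂ) * ((m : ℂ) + p) ^ 2 * μ +
    2 * (Real.pi : ℂ) * Complex.I * ((m : ℂ) + p) * q) =
    ((-Real.pi * (m + p) ^ 2 : ℝ) : ℂ) * μ + ((2 * Real.pi * (m + p) * q : ℝ) : ℂ) * I := by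
    push_cast; ring
  rw [this, Complex.add_re, Complex.re_ofReal_mul, Complex.re_ofReal_mul]
  simp

lemma hasDerivAt_thTerm (p q : ℂ) (m : ℤ) (μ : ℂ) :
    HasDerivAt (thTerm p q m) (-(Real.pi : ℂ) * (((m : ℂ) + p) ^ 2 * thTerm p q m μ)) μ := by
  have h : HasDerivAt (fun μ : ℂ => -(Real.pi : ℂ) * ((m : ℂ) + p) ^ 2 * μ +
    2 * (Real.pi : ℂ) * Complex.I * ((m : ℂ) + p) * q) (-(Real.pi : ℂ) * ((m : ℂ) + p) ^ 2) μ := by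
    have h' := (((hasDerivAt_id μ).const_mul (-(Real.pi : ℂ) * ((m : ℂ) + p) ^ 2)).add_const
      (2 * (Real.pi : ℂ) * Complex.I * ((m : ℂ) + p) * q))
    rw [mul_one] at h'
    exact h'
  have h2 : HasDerivAt (thTerm p q m) (thTerm p q m μ *
    (-(Real.pi : ℂ) * ((m : ℂ) + p) ^ 2)) μ := h.cexp
  have e : -(Real.pi : ℂ) * (((m : ℂ) + p) ^ 2 * thTerm p q m μ) = thTerm p q m μ *
    (-(Real.pi : ℂ) * ((m : ℂ) + p) ^ 2) := by ring
  rw [e]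
  exact h2

lemma hasDerivAt_theta (p q : ℝ) (μ : ℂ) (hμ : 0 < μ.re) :
    HasDerivAt (theta p q) (thetaD 1 p q μ) μ := by
  set ε := μ.re / 2 with hε
  have hε0 : 0 < ε := by positivity
  have hopen : IsOpen {ν : ℂ | ε < ν.re} := isOpen_lt continuous_const Complex.continuous_re
  have hmem : μ ∈ {ν : ℂ | ε < ν.re} := by simp [hε, hμ]
  have hu : Summable (fun m : ℤ => ‖thTerm p q m (ε : ℂ)‖) :=
    (summable_thTerm p q ε (by simpa using hε0)).norm
  have hd : ∀ m : ℤ, DifferentiableOn ℂ (thTerm p q m) {ν : ℂ | ε < ν.re} := fun m ν _ =>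
    (hasDerivAt_thTerm p q m ν).differentiableAt.differentiableWithinAt
  have hb : ∀ (m : ℤ) (ν : ℂ), ν ∈ {ν : ℂ | ε < ν.re} →
      ‖thTerm p q m ν‖ ≤ ‖thTerm p q m (ε : ℂ)‖ := by
    intro m ν hν
    rw [norm_thTerm, norm_thTerm, Real.exp_le_exp, Complex.ofReal_re]
    have : 0 ≤ Real.pi * (m + p) ^ 2 := by positivity
    have h2 : ε < ν.re := hν
    nlinarith
  have h1 := differentiableOn_tsum_of_summable_norm hu hd hopen hb
  have h2 := hasSum_deriv_of_summable_norm hu hd hopen hb hmem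
  have h3 := (h1.differentiableAt (hopen.mem_nhds hmem)).hasDerivAt
  have h4 : (fun w => ∑' i : ℤ, thTerm p q i w) = theta p q := rfl
  rw [h4] at h2 h3
  suffices e : thetaD 1 p q μ = deriv (theta p q) μ by
    rw [e]; exact h3
  rw [← h2.tsum_eq, thetaD, pow_one, ← tsum_mul_left]
  refine tsum_congr fun m => ?_
  rw [(hasDerivAt_thTerm p q m μ).deriv]
  rfl

lemma isOpen_H : IsOpen {ν : ℂ | 0 < ν.re} := isOpen_lt continuous_const Complex.continuous_re

lemma ne_zero_of_re {μ : ℂ} (hμ : 0 < μ.re) : μ ≠ 0 := by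
  rintro rfl; simp at hμ

lemma inv_re_pos {μ : ℂ} (hμ : 0 < μ.re) : 0 < (1 / μ).re := by
  rw [one_div, Complex.inv_re]
  exact div_pos hμ (Complex.normSq_pos.mpr (ne_zero_of_re hμ))

lemma analytic_theta (p q : ℝ) : AnalyticOnNhd ℂ (theta p q) {ν : ℂ | 0 < ν.re} :=
  DifferentiableOn.analyticOnNhd
    (fun ν hν => (hasDerivAt_theta p q ν hν).differentiableAt.differentiableWithinAt) isOpen_H

lemma analytic_thetaD (p q : ℝ) : AnalyticOnNhd ℂ (thetaD 1 p q) {ν : ℂ | 0 < ν.re} :=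
  (analytic_theta p q).deriv.congr isOpen_H fun ν hν => (hasDerivAt_theta p q ν hν).deriv

lemma analytic_v (p q : ℝ) (r : ℝ) (hr : 0 < r)
    (h : ∀ ν : ℂ, 0 < ν.re → theta p q ν ≠ 0) :
    AnalyticOnNhd ℂ (fun μ => 1 / (μ + (r : ℂ)) + 2 * thetaD 1 p q μ / theta p q μ)
      {ν : ℂ | 0 < ν.re} := by
  intro ν hν
  have hν' : 0 < ν.re := hν
  refine AnalyticAt.add (AnalyticAt.div analyticAt_const (analyticAt_id.add analyticAt_const) ?_)
    (AnalyticAt.div (analyticAt_const.mul (analytic_thetaD p q ν hν)) (analytic_theta p q ν hν)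
      (h ν hν))
  apply ne_zero_of_re
  simp; linarith

lemma theta_transform (μ : ℂ) (hμ : 0 < μ.re) :
    theta 0 (1 / 2) (1 / μ) = μ ^ (1 / 2 : ℂ) * theta (1 / 2) 0 μ := by
  have h0 := ne_zero_of_re hμ
  rw [theta_eq, theta_eq, jacobiTheta₂_functional_equation (0 + I * μ * (1 / 2)) (I * μ)]
  have e1 : -I * (I * μ) = μ := by linear_combination (-μ) * I_sq
  have e2 : (0 + I * μ * (1 / 2)) / (I * μ) = 1 / 2 := by field_simp [I_ne_zero]; simp
  have e3 : -1 / (I * μ) = I * (1 / μ) := by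
    field_simp [I_ne_zero]; exact I_sq.symm
  have e4 : -(Real.pi : ℂ) * I * (0 + I * μ * (1 / 2)) ^ 2 / (I * μ) = Real.pi * μ / 4 := by
    have : (I * μ) ≠ 0 := mul_ne_zero I_ne_zero h0
    rw [div_eq_iff this]
    linear_combination (-(Real.pi : ℂ) * I * μ ^ 2 / 4) * I_sq
  rw [e1, e2, e3, e4]
  have hc : μ ^ (1 / 2 : ℂ) ≠ 0 := by
    rw [Ne, Complex.cpow_eq_zero_iff]; tauto
  have e5 : Complex.exp (-(Real.pi : ℂ) * (1 / 2) ^ 2 * μ + 2 * Real.pi * I * (1 / 2) * 0) *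
      Complex.exp (Real.pi * μ / 4) = 1 := by
    rw [← Complex.exp_add, Complex.exp_eq_one_iff]; exact ⟨0, by push_cast; ring⟩
  have e6 : μ ^ (1 / 2 : ℂ) * (1 / μ ^ (1 / 2 : ℂ)) = 1 := by field_simp
  have e7 : Complex.exp (-(Real.pi : ℂ) * 0 ^ 2 * (1 / μ) + 2 * Real.pi * I * 0 * (1 / 2)) = 1 := by
    simp
  rw [e7]
  have e8 : (1 / 2 + I * (1 / μ) * 0 : ℂ) = 1 / 2 := by ring
  rw [e8]
  generalize jacobiTheta₂ (1 / 2) (I * (1 / μ)) = J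
  generalize Complex.exp (Real.pi * μ / 4) = A at *
  generalize Complex.exp (-(Real.pi : ℂ) * (1 / 2) ^ 2 * μ + 2 * Real.pi * I * (1 / 2) * 0) = B at *
  linear_combination (-J) * e5 - B * A * J * e6

lemma deriv_step {F R : ℂ → ℂ} {R' μ : ℂ} (hμ : 0 < μ.re)
    (hF : ∀ ν : ℂ, 0 < ν.re → F (1 / ν) = R ν)
    (hd : DifferentiableAt ℂ F (1 / μ)) (hR : HasDerivAt R R' μ) :
    deriv F (1 / μ) = -μ ^ 2 * R' := by
  have h0 := ne_zero_of_re hμ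
  have h1 : HasDerivAt (fun ν : ℂ => 1 / ν) (-(μ ^ 2)⁻¹) μ := by
    simpa using hasDerivAt_inv h0
  have h2 := HasDerivAt.comp μ hd.hasDerivAt h1
  have h3 : (F ∘ fun ν : ℂ => 1 / ν) =ᶠ[nhds μ] R := by
    filter_upwards [isOpen_H.mem_nhds hμ] with ν hν using hF ν hν
  have h4 := (h2.congr_of_eventuallyEq h3.symm).unique hR
  rw [← h4]
  field_simp

lemma theta_half_zero : ((1 / 2 : ℝ) : ℂ) = 1 / 2 := by push_cast; rfl

lemma v_transform (q0 : ℝ) (hq0 : 0 < q0) (μ : ℂ) (hμ : 0 < μ.re)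
    (h2 : ∀ ν : ℂ, 0 < ν.re → theta (1 / 2) 0 ν ≠ 0) :
    v3 (q0 : ℂ) (1 / μ) = -μ ^ 2 * v1 (1 / (q0 : ℂ)) μ := by
  have h0 := ne_zero_of_re hμ
  have hc : μ ^ (1 / 2 : ℂ) ≠ 0 := by
    rw [Ne, Complex.cpow_eq_zero_iff]; tauto
  have d2 : HasDerivAt (theta (1 / 2) 0) (thetaD 1 (1 / 2) 0 μ) μ := by
    simpa using hasDerivAt_theta (1 / 2) 0 μ hμ
  have d4 : HasDerivAt (theta 0 (1 / 2)) (thetaD 1 0 (1 / 2) (1 / μ)) (1 / μ) := by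
    simpa using hasDerivAt_theta 0 (1 / 2) (1 / μ) (inv_re_pos hμ)
  have dp : HasDerivAt (fun x : ℂ => x ^ (1 / 2 : ℂ)) ((1 / 2) * (μ ^ (1 / 2 : ℂ) / μ)) μ := by
    have := (hasDerivAt_id μ).cpow_const (c := 1 / 2) (Or.inl hμ)
    rw [Complex.cpow_sub _ _ (by simpa using h0)] at this
    simpa using this
  have key := deriv_step hμ theta_transform d4.differentiableAt (dp.mul d2)
  rw [d4.deriv] at key
  rw [v3, v1, key, theta_transform μ hμ]
  have hθ := h2 μ hμ
  have hq : (q0 : ℂ) ≠ 0 := by exact_mod_cast hq0.ne'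
  have hs : 1 + (q0 : ℂ) * μ ≠ 0 := by
    apply ne_zero_of_re; simp; positivity
  have e1 : 1 / (1 / μ + (q0 : ℂ)) = μ / (1 + q0 * μ) := by
    rw [div_add' _ _ _ h0, one_div_div]
  have e2 : 1 / (μ + 1 / (q0 : ℂ)) = q0 / (1 + q0 * μ) := by
    rw [add_div' _ _ _ hq, one_div_div]; congr 1; ring
  have e3 : μ / (1 + q0 * μ) = μ - μ ^ 2 * (q0 / (1 + q0 * μ)) := by
    rw [mul_div_assoc', eq_sub_iff_add_eq, ← add_div, div_eq_iff hs]; ring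
  rw [e1, e2, e3]
  generalize (q0 : ℂ) / (1 + q0 * μ) = X
  generalize μ ^ (1 / 2 : ℂ) = s at *
  generalize theta (1 / 2) 0 μ = t at *
  generalize thetaD 1 (1 / 2) 0 μ = t' at *
  field_simp
  ring

end Helpers

/-- Lemma 6.4: behavior of `w₃[q₀]` and its μ-derivatives up to order 4 under
`iμ ↦ i/μ`, expressed through `w₁[1/q₀]`. -/
theorem statement14 (q0 : ℝ) (hq0 : 0 < q0) (μ : ℂ) (hμ : 0 < μ.re)
    (h2 : ∀ ν : ℂ, 0 < ν.re → theta (1 / 2) 0 ν ≠ 0)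
    (h3 : ∀ ν : ℂ, 0 < ν.re → theta 0 0 ν ≠ 0)
    (h4 : ∀ ν : ℂ, 0 < ν.re → theta 0 (1 / 2) ν ≠ 0) :
    v3 (q0 : ℂ) (1 / μ) = -μ ^ 2 * v1 (1 / (q0 : ℂ)) μ ∧
    iteratedDeriv 1 (v3 (q0 : ℂ)) (1 / μ) =
        μ ^ 4 * iteratedDeriv 1 (v1 (1 / (q0 : ℂ))) μ + 2 * μ ^ 3 * v1 (1 / (q0 : ℂ)) μ ∧
    iteratedDeriv 2 (v3 (q0 : ℂ)) (1 / μ) =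
        -μ ^ 6 * iteratedDeriv 2 (v1 (1 / (q0 : ℂ))) μ -
          6 * μ ^ 5 * iteratedDeriv 1 (v1 (1 / (q0 : ℂ))) μ - 6 * μ ^ 4 * v1 (1 / (q0 : ℂ)) μ ∧
    iteratedDeriv 3 (v3 (q0 : ℂ)) (1 / μ) =
        μ ^ 8 * iteratedDeriv 3 (v1 (1 / (q0 : ℂ))) μ +
          12 * μ ^ 7 * iteratedDeriv 2 (v1 (1 / (q0 : ℂ))) μ +
          36 * μ ^ 6 * iteratedDeriv 1 (v1 (1 / (q0 : ℂ))) μ + 24 * μ ^ 5 * v1 (1 / (q0 : ℂ)) μ ∧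
    iteratedDeriv 4 (v3 (q0 : ℂ)) (1 / μ) =
        -μ ^ 10 * iteratedDeriv 4 (v1 (1 / (q0 : ℂ))) μ -
          20 * μ ^ 9 * iteratedDeriv 3 (v1 (1 / (q0 : ℂ))) μ -
          120 * μ ^ 8 * iteratedDeriv 2 (v1 (1 / (q0 : ℂ))) μ -
          240 * μ ^ 7 * iteratedDeriv 1 (v1 (1 / (q0 : ℂ))) μ -
          120 * μ ^ 6 * v1 (1 / (q0 : ℂ)) μ := by
  have hq : (q0 : ℂ) ≠ 0 := by exact_mod_cast hq0.ne'
  have A3 : AnalyticOnNhd ℂ (v3 (q0 : ℂ)) {ν : ℂ | 0 < ν.re} := by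
    have := analytic_v 0 (1 / 2) q0 hq0 (by simpa using h4)
    push_cast at this
    exact this
  have A1 : AnalyticOnNhd ℂ (v1 (1 / (q0 : ℂ))) {ν : ℂ | 0 < ν.re} := by
    have := analytic_v (1 / 2) 0 (1 / q0) (by positivity) (by simpa using h2)
    push_cast at this
    exact this
  generalize hf : v3 (q0 : ℂ) = f at *
  generalize hg : v1 (1 / (q0 : ℂ)) = g at *
  have E0 : ∀ ν : ℂ, 0 < ν.re → f (1 / ν) = -ν ^ 2 * g ν := by
    intro ν hν; rw [← hf, ← hg]; exact v_transform q0 hq0 ν hν h2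
  have D3 : ∀ n (ν : ℂ), 0 < ν.re → DifferentiableAt ℂ (iteratedDeriv n f) (1 / ν) := by
    intro n ν hν
    rw [iteratedDeriv_eq_iterate]
    exact (A3.iterated_deriv n (1 / ν) (inv_re_pos hν)).differentiableAt
  have D1 : ∀ n (ν : ℂ), 0 < ν.re →
      HasDerivAt (iteratedDeriv n g) (iteratedDeriv (n + 1) g ν) ν := by
    intro n ν hν
    rw [iteratedDeriv_succ, iteratedDeriv_eq_iterate]
    exact (A1.iterated_deriv n ν hν).differentiableAt.hasDerivAt
  have P : ∀ (c : ℂ) (k n : ℕ) (ν : ℂ), 0 < ν.re →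
      HasDerivAt (fun x => c * x ^ k * iteratedDeriv n g x)
        (c * (k * ν ^ (k - 1)) * iteratedDeriv n g ν + c * ν ^ k * iteratedDeriv (n + 1) g ν) ν :=
    fun c k n ν hν => ((hasDerivAt_pow k ν).const_mul c).mul (D1 n ν hν)
  have F0 : ∀ ν : ℂ, 0 < ν.re → iteratedDeriv 0 f (1 / ν) = (-1) * ν ^ 2 * iteratedDeriv 0 g ν := by
    intro ν hν; rw [iteratedDeriv_zero, iteratedDeriv_zero, E0 ν hν]; ring
  have F1 : ∀ ν : ℂ, 0 < ν.re → iteratedDeriv 1 f (1 / ν) =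
      1 * ν ^ 4 * iteratedDeriv 1 g ν + 2 * ν ^ 3 * iteratedDeriv 0 g ν := by
    intro ν hν
    rw [iteratedDeriv_succ, deriv_step hν F0 (D3 0 ν hν) (P (-1) 2 0 ν hν)]
    push_cast; ring
  have F2 : ∀ ν : ℂ, 0 < ν.re → iteratedDeriv 2 f (1 / ν) =
      (-1) * ν ^ 6 * iteratedDeriv 2 g ν + (-6) * ν ^ 5 * iteratedDeriv 1 g ν
        + (-6) * ν ^ 4 * iteratedDeriv 0 g ν := by
    intro ν hν
    rw [iteratedDeriv_succ, deriv_step hν F1 (D3 1 ν hν) ((P 1 4 1 ν hν).add (P 2 3 0 ν hν))]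
    push_cast; ring
  have F3 : ∀ ν : ℂ, 0 < ν.re → iteratedDeriv 3 f (1 / ν) =
      1 * ν ^ 8 * iteratedDeriv 3 g ν + 12 * ν ^ 7 * iteratedDeriv 2 g ν
        + 36 * ν ^ 6 * iteratedDeriv 1 g ν + 24 * ν ^ 5 * iteratedDeriv 0 g ν := by
    intro ν hν
    rw [iteratedDeriv_succ, deriv_step hν F2 (D3 2 ν hν)
      (((P (-1) 6 2 ν hν).add (P (-6) 5 1 ν hν)).add (P (-6) 4 0 ν hν))]
    push_cast; ring
  have F4 : iteratedDeriv 4 f (1 / μ) =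
      (-1) * μ ^ 10 * iteratedDeriv 4 g μ + (-20) * μ ^ 9 * iteratedDeriv 3 g μ
        + (-120) * μ ^ 8 * iteratedDeriv 2 g μ + (-240) * μ ^ 7 * iteratedDeriv 1 g μ
        + (-120) * μ ^ 6 * iteratedDeriv 0 g μ := by
    rw [iteratedDeriv_succ, deriv_step hμ F3 (D3 3 μ hμ)
      ((((P 1 8 3 μ hμ).add (P 12 7 2 μ hμ)).add (P 36 6 1 μ hμ)).add (P 24 5 0 μ hμ))]
    push_cast; ring
  have hz : iteratedDeriv 0 g μ = g μ := by rw [iteratedDeriv_zero]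
  refine ⟨E0 μ hμ, ?_, ?_, ?_, ?_⟩
  · rw [F1 μ hμ, hz]; ring
  · rw [F2 μ hμ, hz]; ring
  · rw [F3 μ hμ, hz]; ring
  · rw [F4, hz]; ring

end
end

section
/- Let p, q ∈ ℂ and μ ∈ ℂ with Re μ > 0. Assume θ[p,q](iν) ≠ 0 and ∂qθ[p,q](iν) ≠ 0 for every ν with Re ν > 0. Then ã₂[p,q](iμ+1) = ã₂[p,q+p+1/2](iμ), and if moreover w₁[−q,p](iμ), w₂[−q,p](iμ), w₃[−q,p](iμ) and F[−q,p](iμ) are all nonzero, then ã₂[p,q](i/μ) = −μ² ã₂[−q,p](iμ). -/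
noncomputable section

open Complex in
lemma aux_theta_shift (p q μ : ℂ) : theta p q (μ - I) =
    cexp (-(Real.pi : ℂ) * I * (p * (p + 1))) * theta p (q + p + 1 / 2) μ := by
  unfold theta
  rw [← tsum_mul_left]
  refine tsum_congr fun m => ?_
  rw [← Complex.exp_add, Complex.exp_eq_exp_iff_exists_int]
  obtain ⟨k, hk⟩ := Int.even_mul_succ_self m
  refine ⟨k - m, ?_⟩
  have hk' : (m : ℂ) * (m + 1) = k + k := by exact_mod_cast hk
  push_cast
  linear_combination (Real.pi : ℂ) * I * hk'

open Complex in
lemma aux_thetaQ_shift (p q μ : ℂ) : thetaQ p q (μ - I) =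
    cexp (-(Real.pi : ℂ) * I * (p * (p + 1))) * thetaQ p (q + p + 1 / 2) μ := by
  unfold thetaQ
  rw [mul_left_comm (cexp _)]
  congr 1
  rw [← tsum_mul_left]
  refine tsum_congr fun m => ?_
  rw [mul_left_comm]
  congr 1
  rw [← Complex.exp_add, Complex.exp_eq_exp_iff_exists_int]
  obtain ⟨k, hk⟩ := Int.even_mul_succ_self m
  refine ⟨k - m, ?_⟩
  have hk' : (m : ℂ) * (m + 1) = k + k := by exact_mod_cast hk
  push_cast
  linear_combination (Real.pi : ℂ) * I * hk'

open Complex in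
lemma aux_theta_q1 (p q μ : ℂ) : theta p (q + 1) μ =
    cexp (2 * (Real.pi : ℂ) * I * p) * theta p q μ := by
  unfold theta
  rw [← tsum_mul_left]
  refine tsum_congr fun m => ?_
  rw [← Complex.exp_add, Complex.exp_eq_exp_iff_exists_int]
  exact ⟨m, by ring⟩

open Complex in
lemma aux_thetaQ_q1 (p q μ : ℂ) : thetaQ p (q + 1) μ =
    cexp (2 * (Real.pi : ℂ) * I * p) * thetaQ p q μ := by
  unfold thetaQ
  rw [mul_left_comm (cexp _)]
  congr 1
  rw [← tsum_mul_left]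
  refine tsum_congr fun m => ?_
  rw [mul_left_comm]
  congr 1
  rw [← Complex.exp_add, Complex.exp_eq_exp_iff_exists_int]
  exact ⟨m, by ring⟩

open Complex in
lemma aux_theta_p1 (p q μ : ℂ) : theta (p + 1) q μ = theta p q μ := by
  unfold theta
  rw [← Equiv.tsum_eq (Equiv.addRight (1 : ℤ)) (fun m : ℤ => cexp (-(Real.pi : ℂ) * ((m : ℂ) + p) ^ 2 * μ +
    2 * (Real.pi : ℂ) * I * ((m : ℂ) + p) * q))]
  refine tsum_congr fun m => ?_
  simp only [Equiv.coe_addRight, Int.cast_add, Int.cast_one]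
  congr 1
  ring

open Complex in
lemma aux_thetaQ_p1 (p q μ : ℂ) : thetaQ (p + 1) q μ = thetaQ p q μ := by
  unfold thetaQ
  rw [← Equiv.tsum_eq (Equiv.addRight (1 : ℤ)) (fun m : ℤ => ((m : ℂ) + p) *
    cexp (-(Real.pi : ℂ) * ((m : ℂ) + p) ^ 2 * μ +
    2 * (Real.pi : ℂ) * I * ((m : ℂ) + p) * q))]
  congr 1
  refine tsum_congr fun m => ?_
  simp only [Equiv.coe_addRight, Int.cast_add, Int.cast_one]
  congr 1
  · ring
  · congr 1
    ring

open Complex in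
lemma aux_theta_jacobi (p q μ : ℂ) : theta p q μ =
    cexp (-(Real.pi : ℂ) * p ^ 2 * μ + 2 * (Real.pi : ℂ) * I * p * q) *
      jacobiTheta₂ (q + p * (I * μ)) (I * μ) := by
  unfold theta jacobiTheta₂ jacobiTheta₂_term
  rw [← tsum_mul_left]
  refine tsum_congr fun m => ?_
  rw [← Complex.exp_add]
  congr 1
  linear_combination -(2 * (Real.pi : ℂ) * m * p * μ + Real.pi * m ^ 2 * μ) * Complex.I_sq

open Complex in
lemma aux_thetaQ_jacobi (p q μ : ℂ) (hμ : 0 < μ.re) : thetaQ p q μ =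
    cexp (-(Real.pi : ℂ) * p ^ 2 * μ + 2 * (Real.pi : ℂ) * I * p * q) *
      (2 * Real.pi * I * p * jacobiTheta₂ (q + p * (I * μ)) (I * μ) +
        jacobiTheta₂' (q + p * (I * μ)) (I * μ)) := by
  have him : 0 < (I * μ).im := by simpa using hμ
  have h1 := (hasSum_jacobiTheta₂_term (q + p * (I * μ)) him).mul_left (2 * Real.pi * I * p)
  have h2 := hasSum_jacobiTheta₂'_term (q + p * (I * μ)) him
  have h3 := (h1.add h2).mul_left
    (cexp (-(Real.pi : ℂ) * p ^ 2 * μ + 2 * (Real.pi : ℂ) * I * p * q))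
  rw [← h3.tsum_eq]
  unfold thetaQ
  rw [← tsum_mul_left]
  refine tsum_congr fun m => ?_
  have e : -(Real.pi : ℂ) * ((m : ℂ) + p) ^ 2 * μ + 2 * (Real.pi : ℂ) * I * ((m : ℂ) + p) * q =
      (-(Real.pi : ℂ) * p ^ 2 * μ + 2 * (Real.pi : ℂ) * I * p * q) +
      (2 * Real.pi * I * m * (q + p * (I * μ)) + Real.pi * I * m ^ 2 * (I * μ)) := by
    linear_combination -(2 * (Real.pi : ℂ) * m * p * μ + Real.pi * m ^ 2 * μ) * Complex.I_sq
  rw [e, Complex.exp_add]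
  unfold jacobiTheta₂'_term jacobiTheta₂_term
  ring

open Complex in
lemma aux_theta_S (p q x : ℂ) (hx : 0 < x.re) : theta p q x =
    1 / x ^ (1 / 2 : ℂ) * cexp (2 * (Real.pi : ℂ) * I * p * q) * theta (-q) p x⁻¹ := by
  have hx0 : x ≠ 0 := by rintro rfl; simp at hx
  rw [aux_theta_jacobi, aux_theta_jacobi, jacobiTheta₂_functional_equation]
  have e1 : -I * (I * x) = x := by linear_combination -x * Complex.I_sq
  have e2 : (q + p * (I * x)) / (I * x) = p + -q * (I * x⁻¹) := by
    field_simp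
    linear_combination q * Complex.I_sq
  have e3 : -1 / (I * x) = I * x⁻¹ := by
    field_simp
    linear_combination - Complex.I_sq
  rw [e1, e2, e3]
  have e4 : cexp (-(Real.pi : ℂ) * p ^ 2 * x + 2 * (Real.pi : ℂ) * I * p * q) *
      cexp (-(Real.pi : ℂ) * I * (q + p * (I * x)) ^ 2 / (I * x)) =
      cexp (2 * (Real.pi : ℂ) * I * p * q) *
      cexp (-(Real.pi : ℂ) * (-q) ^ 2 * x⁻¹ + 2 * (Real.pi : ℂ) * I * (-q) * p) := by
    rw [← Complex.exp_add, ← Complex.exp_add]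
    congr 1
    field_simp
    linear_combination -p ^ 2 * x ^ 2 * Complex.I_sq
  linear_combination (1 / x ^ (1 / 2 : ℂ) * jacobiTheta₂ (p + -q * (I * x⁻¹)) (I * x⁻¹)) * e4

open Complex in
lemma aux_thetaQ_S (p q x : ℂ) (hx : 0 < x.re) : thetaQ p q x =
    1 / x ^ (1 / 2 : ℂ) * cexp (2 * (Real.pi : ℂ) * I * p * q) * (-I * x⁻¹) *
      thetaQ (-q) p x⁻¹ := by
  have hx0 : x ≠ 0 := by rintro rfl; simp at hx
  have hx' : 0 < (x⁻¹).re := by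
    rw [Complex.inv_re]; exact div_pos hx (Complex.normSq_pos.mpr hx0)
  rw [aux_thetaQ_jacobi _ _ _ hx, aux_thetaQ_jacobi _ _ _ hx', jacobiTheta₂_functional_equation,
    jacobiTheta₂'_functional_equation]
  have e1 : -I * (I * x) = x := by linear_combination -x * Complex.I_sq
  have e2 : (q + p * (I * x)) / (I * x) = p + -q * (I * x⁻¹) := by
    field_simp
    linear_combination q * Complex.I_sq
  have e3 : -1 / (I * x) = I * x⁻¹ := by
    field_simp
    linear_combination - Complex.I_sq
  rw [e1, e2, e3]
  have e4 : cexp (-(Real.pi : ℂ) * p ^ 2 * x + 2 * (Real.pi : ℂ) * I * p * q) *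
      cexp (-(Real.pi : ℂ) * I * (q + p * (I * x)) ^ 2 / (I * x)) =
      cexp (2 * (Real.pi : ℂ) * I * p * q) *
      cexp (-(Real.pi : ℂ) * (-q) ^ 2 * x⁻¹ + 2 * (Real.pi : ℂ) * I * (-q) * p) := by
    rw [← Complex.exp_add, ← Complex.exp_add]
    congr 1
    field_simp
    linear_combination -p ^ 2 * x ^ 2 * Complex.I_sq
  have e5 : ∀ J J' E : ℂ, 2 * Real.pi * I * p * (1 / x ^ (1 / 2 : ℂ) * E * J) +
      1 / x ^ (1 / 2 : ℂ) * E / (I * x) * (J' - 2 * Real.pi * I * (q + p * (I * x)) * J) =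
      1 / x ^ (1 / 2 : ℂ) * E * (-I * x⁻¹) * (2 * Real.pi * I * (-q) * J + J') := by
    intro J J' E
    have : 1 / (I * x) = -I * x⁻¹ := by
      field_simp
      linear_combination Complex.I_sq
    rw [div_eq_mul_one_div _ (I * x), this]
    have h : x⁻¹ * x = 1 := inv_mul_cancel₀ hx0
    linear_combination (2 * Real.pi * I * p * (1 / x ^ (1 / 2 : ℂ)) * E * J) *
      (I ^ 2 * h + Complex.I_sq)
  rw [e5]
  generalize 2 * Real.pi * I * (-q) * jacobiTheta₂ (p + -q * (I * x⁻¹)) (I * x⁻¹) +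
    jacobiTheta₂' (p + -q * (I * x⁻¹)) (I * x⁻¹) = K
  linear_combination (1 / x ^ (1 / 2 : ℂ) * (-I * x⁻¹) * K) * e4

open Complex in
lemma aux_diff_theta (p q : ℂ) : DifferentiableOn ℂ (theta p q) {x | 0 < x.re} := by
  intro x hx
  have him : 0 < (I * x).im := by simpa using hx
  apply DifferentiableAt.differentiableWithinAt
  have : theta p q = fun μ => cexp (-(Real.pi : ℂ) * p ^ 2 * μ + 2 * (Real.pi : ℂ) * I * p * q) *
      jacobiTheta₂ (q + p * (I * μ)) (I * μ) := by
    funext μ; exact aux_theta_jacobi p q μ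
  rw [this]
  refine DifferentiableAt.mul (by fun_prop) ?_
  have h1 := (hasFDerivAt_jacobiTheta₂ (q + p * (I * x)) him).differentiableAt
  exact DifferentiableAt.comp (g := fun p : ℂ × ℂ ↦ jacobiTheta₂ p.1 p.2)
    (f := fun μ : ℂ => (q + p * (I * μ), I * μ)) x h1 (by fun_prop)

open Complex in
lemma aux_diff_jac' (p q x : ℂ) (hx : 0 < x.re) :
    DifferentiableAt ℂ (fun μ => jacobiTheta₂' (q + p * (I * μ)) (I * μ)) x := by
  have him : 0 < (I * x).im := by simpa using hx
  obtain ⟨T, hT, hτ'⟩ := exists_between him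
  obtain ⟨S, hz⟩ := exists_gt |im (q + p * (I * x))|
  let V : Set ℂ := {μ | |im (q + p * (I * μ))| < S} ∩ {μ | T < im (I * μ)}
  have hV : IsOpen V := by
    refine IsOpen.inter (isOpen_lt (by fun_prop) (by fun_prop))
      (isOpen_lt (by fun_prop) (by fun_prop))
  have hxV : x ∈ V := ⟨hz, hτ'⟩
  refine (differentiableOn_tsum_of_summable_norm
    (u := fun n : ℤ => 2 * Real.pi * |n| * Real.exp (-Real.pi * (T * n ^ 2 - 2 * S * |n|)))
    ?_ ?_ hV ?_).differentiableAt (hV.mem_nhds hxV)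
  · have := (summable_pow_mul_jacobiTheta₂_term_bound S hT 1).mul_left (2 * Real.pi)
    simpa [mul_assoc] using this
  · intro n
    unfold jacobiTheta₂'_term jacobiTheta₂_term
    fun_prop
  · intro n w hw
    exact norm_jacobiTheta₂'_term_le hT hw.1.le hw.2.le n

open Complex in
lemma aux_diff_thetaQ (p q : ℂ) : DifferentiableOn ℂ (thetaQ p q) {x | 0 < x.re} := by
  intro x hx
  have him : 0 < (I * x).im := by simpa using hx
  have h1 := (hasFDerivAt_jacobiTheta₂ (q + p * (I * x)) him).differentiableAt
  have h2 : DifferentiableAt ℂ (fun μ => jacobiTheta₂ (q + p * (I * μ)) (I * μ)) x :=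
    DifferentiableAt.comp (g := fun p : ℂ × ℂ ↦ jacobiTheta₂ p.1 p.2)
    (f := fun μ : ℂ => (q + p * (I * μ), I * μ)) x h1 (by fun_prop)
  have h3 := aux_diff_jac' p q x hx
  have h4 : DifferentiableAt ℂ (fun μ =>
      cexp (-(Real.pi : ℂ) * p ^ 2 * μ + 2 * (Real.pi : ℂ) * I * p * q) *
      (2 * Real.pi * I * p * jacobiTheta₂ (q + p * (I * μ)) (I * μ) +
        jacobiTheta₂' (q + p * (I * μ)) (I * μ))) x :=
    DifferentiableAt.mul (by fun_prop) ((h2.const_mul _).add h3)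
  exact h4.differentiableWithinAt.congr (fun y hy => aux_thetaQ_jacobi p q y hy)
    (aux_thetaQ_jacobi p q x hx)

lemma aux_isOpen : IsOpen {x : ℂ | 0 < x.re} := isOpen_lt (by fun_prop) (by fun_prop)

lemma aux_inv_re {x : ℂ} (hx : 0 < x.re) : 0 < (x⁻¹).re := by
  have hx0 : x ≠ 0 := by rintro rfl; simp at hx
  rw [Complex.inv_re]; exact div_pos hx (Complex.normSq_pos.mpr hx0)

/-- Derivatives of a weight two transform. -/
lemma aux_calc_w (f W : ℂ → ℂ) (ε : ℂ) (hW : DifferentiableOn ℂ W {x | 0 < x.re})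
    (h : ∀ x : ℂ, 0 < x.re → f x = ε * ((x⁻¹) ^ 2 * W x⁻¹)) (μ : ℂ) (hμ : 0 < μ.re) :
    deriv f (1 / μ) = ε * (-2 * μ ^ 3 * W μ - μ ^ 4 * deriv W μ) ∧
    iteratedDeriv 2 f (1 / μ) = ε * (6 * μ ^ 4 * W μ + 6 * μ ^ 5 * deriv W μ +
      μ ^ 6 * iteratedDeriv 2 W μ) := by
  have hW' : DifferentiableOn ℂ (deriv W) {x | 0 < x.re} := hW.deriv aux_isOpen
  have key : ∀ x : ℂ, 0 < x.re → HasDerivAt f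
      (ε * (-2 * (x⁻¹) ^ 3 * W x⁻¹ - (x⁻¹) ^ 4 * deriv W x⁻¹)) x := by
    intro x hx
    have hx0 : x ≠ 0 := by rintro rfl; simp at hx
    have hi := hasDerivAt_inv hx0
    have hWd : HasDerivAt W (deriv W x⁻¹) x⁻¹ :=
      (hW.differentiableAt (aux_isOpen.mem_nhds (aux_inv_re hx))).hasDerivAt
    have h1 := ((hi.pow 2).mul (hWd.comp x hi)).const_mul ε
    have h2 : HasDerivAt f _ x := h1.congr_of_eventuallyEq
      (Filter.eventually_of_mem (aux_isOpen.mem_nhds hx) (fun y hy => h y hy))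
    convert h2 using 1
    simp [-mul_eq_mul_left_iff]
    field_simp
    ring
  have key2 : ∀ x : ℂ, 0 < x.re → HasDerivAt (deriv f)
      (ε * (6 * (x⁻¹) ^ 4 * W x⁻¹ + 6 * (x⁻¹) ^ 5 * deriv W x⁻¹ +
        (x⁻¹) ^ 6 * deriv (deriv W) x⁻¹)) x := by
    intro x hx
    have hx0 : x ≠ 0 := by rintro rfl; simp at hx
    have hi := hasDerivAt_inv hx0
    have hWd : HasDerivAt W (deriv W x⁻¹) x⁻¹ :=
      (hW.differentiableAt (aux_isOpen.mem_nhds (aux_inv_re hx))).hasDerivAt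
    have hWd' : HasDerivAt (deriv W) (deriv (deriv W) x⁻¹) x⁻¹ :=
      (hW'.differentiableAt (aux_isOpen.mem_nhds (aux_inv_re hx))).hasDerivAt
    have h1 := ((((hi.pow 3).const_mul (-2)).mul (hWd.comp x hi)).sub
      ((hi.pow 4).mul (hWd'.comp x hi))).const_mul ε
    have h2 : HasDerivAt (deriv f) _ x := h1.congr_of_eventuallyEq
      (Filter.eventually_of_mem (aux_isOpen.mem_nhds hx)
        (fun y hy => (key y hy).deriv))
    convert h2 using 1
    simp [-mul_eq_mul_left_iff]
    field_simp
    ring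
  have hm : 0 < (1 / μ).re := by simpa using aux_inv_re hμ
  have e : (1 / μ)⁻¹ = μ := by simp
  constructor
  · rw [(key _ hm).deriv, e]
  · rw [iteratedDeriv_succ, iteratedDeriv_one, (key2 _ hm).deriv, e, iteratedDeriv_succ,
      iteratedDeriv_one]

/-- Derivatives of a weight minus two transform. -/
lemma aux_calc_F (f W : ℂ → ℂ) (hW : DifferentiableOn ℂ W {x | 0 < x.re})
    (h : ∀ x : ℂ, 0 < x.re → f x = - (x ^ 2 * W x⁻¹)) (μ : ℂ) (hμ : 0 < μ.re) :
    deriv f (1 / μ) = -2 * μ⁻¹ * W μ + deriv W μ ∧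
    iteratedDeriv 2 f (1 / μ) = -2 * W μ + 2 * μ * deriv W μ - μ ^ 2 * iteratedDeriv 2 W μ := by
  have hW' : DifferentiableOn ℂ (deriv W) {x | 0 < x.re} := hW.deriv aux_isOpen
  have key : ∀ x : ℂ, 0 < x.re → HasDerivAt f (-2 * x * W x⁻¹ + deriv W x⁻¹) x := by
    intro x hx
    have hx0 : x ≠ 0 := by rintro rfl; simp at hx
    have hi := hasDerivAt_inv hx0
    have hWd : HasDerivAt W (deriv W x⁻¹) x⁻¹ :=
      (hW.differentiableAt (aux_isOpen.mem_nhds (aux_inv_re hx))).hasDerivAt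
    have h1 := (((hasDerivAt_id x).pow 2).mul (hWd.comp x hi)).neg
    have h2 : HasDerivAt f _ x := h1.congr_of_eventuallyEq
      (Filter.eventually_of_mem (aux_isOpen.mem_nhds hx) (fun y hy => h y hy))
    convert h2 using 1
    simp [-mul_eq_mul_left_iff]
    field_simp
    ring
  have key2 : ∀ x : ℂ, 0 < x.re → HasDerivAt (deriv f)
      (-2 * W x⁻¹ + 2 * x⁻¹ * deriv W x⁻¹ - (x⁻¹) ^ 2 * deriv (deriv W) x⁻¹) x := by
    intro x hx
    have hx0 : x ≠ 0 := by rintro rfl; simp at hx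
    have hi := hasDerivAt_inv hx0
    have hWd : HasDerivAt W (deriv W x⁻¹) x⁻¹ :=
      (hW.differentiableAt (aux_isOpen.mem_nhds (aux_inv_re hx))).hasDerivAt
    have hWd' : HasDerivAt (deriv W) (deriv (deriv W) x⁻¹) x⁻¹ :=
      (hW'.differentiableAt (aux_isOpen.mem_nhds (aux_inv_re hx))).hasDerivAt
    have h1 := (((hasDerivAt_id x).const_mul (-2)).mul (hWd.comp x hi)).add (hWd'.comp x hi)
    have h2 : HasDerivAt (deriv f) _ x := h1.congr_of_eventuallyEq
      (Filter.eventually_of_mem (aux_isOpen.mem_nhds hx)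
        (fun y hy => (key y hy).deriv))
    convert h2 using 1
    simp [-mul_eq_mul_left_iff]
    field_simp
    ring
  have hm : 0 < (1 / μ).re := by simpa using aux_inv_re hμ
  have e : (1 / μ)⁻¹ = μ := by simp
  constructor
  · rw [(key _ hm).deriv, e]
    ring
  · rw [iteratedDeriv_succ, iteratedDeriv_one, (key2 _ hm).deriv, e, iteratedDeriv_succ,
      iteratedDeriv_one]

lemma aux_sqrt (x : ℂ) : (1 / x ^ (1 / 2 : ℂ)) * (1 / x ^ (1 / 2 : ℂ)) = x⁻¹ := by
  rw [one_div, ← mul_inv, ← pow_two, one_div, ← Nat.cast_ofNat (n := 2),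
    Complex.cpow_nat_inv_pow _ (by norm_num)]

lemma aux_sqrt_ne (x : ℂ) (hx : x ≠ 0) : 1 / x ^ (1 / 2 : ℂ) ≠ 0 := by
  simp [Complex.cpow_eq_zero_iff, hx]

lemma aux_t3 (x : ℂ) (hx : 0 < x.re) : theta 0 0 x = 1 / x ^ (1 / 2 : ℂ) * theta 0 0 x⁻¹ := by
  rw [aux_theta_S _ _ _ hx]; simp

lemma aux_t4 (x : ℂ) (hx : 0 < x.re) :
    theta 0 (1 / 2) x = 1 / x ^ (1 / 2 : ℂ) * theta (1 / 2) 0 x⁻¹ := by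
  rw [aux_theta_S _ _ _ hx, ← aux_theta_p1]; norm_num

lemma aux_t2 (x : ℂ) (hx : 0 < x.re) :
    theta (1 / 2) 0 x = 1 / x ^ (1 / 2 : ℂ) * theta 0 (1 / 2) x⁻¹ := by
  rw [aux_theta_S _ _ _ hx]; simp

open Complex in
lemma aux_expI : cexp ((Real.pi : ℂ) * I * (1 / 2)) = I := by
  conv_rhs => rw [← Complex.exp_pi_div_two_mul_I]
  congr 1; ring

open Complex in
lemma aux_S1 (p q x : ℂ) (hx : 0 < x.re) : w1 p q x = 1 * ((x⁻¹) ^ 2 * w3 (-q) p x⁻¹) := by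
  have hx0 : x ≠ 0 := by rintro rfl; simp at hx
  have hs := aux_sqrt_ne x hx0
  have hss := aux_sqrt x
  unfold w1 w3
  rw [aux_t3 x hx, aux_t4 x hx, aux_theta_S p q x hx, aux_thetaQ_S p (q + 1 / 2) x hx,
    ← aux_thetaQ_p1 (-(q + 1 / 2)), show -(q + 1 / 2) + 1 = -q + 1 / 2 by ring,
    show 2 * (Real.pi : ℂ) * I * p * (q + 1 / 2) = Real.pi * I * p + 2 * Real.pi * I * p * q by ring,
    Complex.exp_add]
  have h1 := Complex.exp_ne_zero (2 * Real.pi * I * p * q)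
  have h2 := Complex.exp_ne_zero (Real.pi * I * p)
  generalize 1 / x ^ (1 / 2 : ℂ) = s at *
  generalize cexp (2 * Real.pi * I * p * q) = a at *
  generalize cexp (Real.pi * I * p) = b at *
  generalize theta (-q) p x⁻¹ = t
  generalize x⁻¹ = y at *
  rw [show b * (s * a * t) = (b * s * a) * t by ring, ← div_div, mul_div_assoc', mul_div_assoc']
  congr 1
  rw [div_eq_iff (by simp [*])]
  generalize thetaQ (-q + 1 / 2) p y = Q
  linear_combination (I ^ 2 / 2 * theta 0 0 y * theta (1/2) 0 y * b * a * s * y * Q) * hss +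
    (1 / 2 * theta 0 0 y * theta (1/2) 0 y * b * a * s * y ^ 2 * Q) * Complex.I_sq

open Complex in
lemma aux_S3 (p q x : ℂ) (hx : 0 < x.re) : w3 p q x = (-1) * ((x⁻¹) ^ 2 * w1 (-q) p x⁻¹) := by
  have hx0 : x ≠ 0 := by rintro rfl; simp at hx
  have hs := aux_sqrt_ne x hx0
  have hss := aux_sqrt x
  unfold w1 w3
  rw [aux_t3 x hx, aux_t2 x hx, aux_theta_S p q x hx, aux_thetaQ_S (p + 1 / 2) q x hx,
    show 2 * (Real.pi : ℂ) * I * (p + 1 / 2) * q = Real.pi * I * q + 2 * Real.pi * I * p * q by ring,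
    show (Real.pi : ℂ) * I * -q = -(Real.pi * I * q) by ring,
    Complex.exp_add, Complex.exp_neg]
  have h1 := Complex.exp_ne_zero (2 * Real.pi * I * p * q)
  have h2 := Complex.exp_ne_zero (Real.pi * I * q)
  generalize 1 / x ^ (1 / 2 : ℂ) = s at *
  generalize cexp (2 * Real.pi * I * p * q) = a at *
  generalize cexp (Real.pi * I * q) = b at *
  generalize theta (-q) p x⁻¹ = t
  generalize x⁻¹ = y at *
  have hb : ∀ N : ℂ, N / (b⁻¹ * t) = N * b / t := fun N => by rw [← div_div, div_inv_eq_mul]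
  rw [hb, ← div_div, mul_div_assoc', mul_div_assoc']
  congr 1
  rw [div_eq_iff (by simp [*])]
  generalize thetaQ (-q) (p + 1 / 2) y = Q
  linear_combination (I / 2 * theta 0 0 y * theta 0 (1/2) y * b * a * s * y * Q) * hss

open Complex in
lemma aux_S2 (p q x : ℂ) (hx : 0 < x.re) : w2 p q x = 1 * ((x⁻¹) ^ 2 * w2 (-q) p x⁻¹) := by
  have hx0 : x ≠ 0 := by rintro rfl; simp at hx
  have hs := aux_sqrt_ne x hx0
  have hss := aux_sqrt x
  unfold w2
  rw [aux_t4 x hx, aux_t2 x hx, aux_theta_S p q x hx, aux_thetaQ_S (p + 1 / 2) (q + 1 / 2) x hx,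
    ← aux_thetaQ_p1 (-(q + 1 / 2)), show -(q + 1 / 2) + 1 = -q + 1 / 2 by ring,
    show 2 * (Real.pi : ℂ) * I * (p + 1 / 2) * (q + 1 / 2) =
      Real.pi * I * q + Real.pi * I * p + 2 * Real.pi * I * p * q + Real.pi * I * (1 / 2) by ring,
    show (Real.pi : ℂ) * I * -q = -(Real.pi * I * q) by ring,
    Complex.exp_add, Complex.exp_add, Complex.exp_add, Complex.exp_neg, aux_expI]
  have h1 := Complex.exp_ne_zero (2 * Real.pi * I * p * q)
  have h2 := Complex.exp_ne_zero (Real.pi * I * q)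
  have h3 := Complex.exp_ne_zero (Real.pi * I * p)
  generalize 1 / x ^ (1 / 2 : ℂ) = s at *
  generalize cexp (2 * Real.pi * I * p * q) = a at *
  generalize cexp (Real.pi * I * q) = b at *
  generalize cexp (Real.pi * I * p) = c at *
  generalize theta (-q) p x⁻¹ = t
  generalize x⁻¹ = y at *
  have hb : ∀ N : ℂ, N / (b⁻¹ * t) = N * b / t := fun N => by rw [← div_div, div_inv_eq_mul]
  rw [hb, show c * (s * a * t) = (c * s * a) * t by ring, ← div_div, mul_div_assoc',
    mul_div_assoc']
  congr 1
  rw [div_eq_iff (by simp [*])]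
  generalize thetaQ (-q + 1 / 2) (p + 1 / 2) y = Q
  linear_combination (-I ^ 3 / 2 * theta (1/2) 0 y * theta 0 (1/2) y * b * c * a * s * y * Q) * hss
    - (I / 2 * theta (1/2) 0 y * theta 0 (1/2) y * b * c * a * s * y ^ 2 * Q) * Complex.I_sq

open Complex in
lemma aux_SF (Λ p q x : ℂ) (hx : 0 < x.re) :
    Ftwo Λ p q x = -(x ^ 2 * Ftwo Λ (-q) p x⁻¹) := by
  have hx0 : x ≠ 0 := by rintro rfl; simp at hx
  have hs := aux_sqrt_ne x hx0
  unfold Ftwo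
  rw [aux_theta_S p q x hx, aux_thetaQ_S p q x hx]
  have h1 := Complex.exp_ne_zero (2 * Real.pi * I * p * q)
  generalize 1 / x ^ (1 / 2 : ℂ) = s at *
  generalize cexp (2 * Real.pi * I * p * q) = a at *
  rw [mul_assoc (s * a), mul_div_mul_left _ _ (mul_ne_zero hs h1), mul_comm (-I * x⁻¹),
    ← div_div (theta (-q) p x⁻¹), div_pow _ (-I * x⁻¹)]
  have : (-I * x⁻¹) ^ 2 = -(x ^ 2)⁻¹ := by
    rw [mul_pow, neg_sq, Complex.I_sq, inv_pow]; ring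
  rw [this, div_neg, div_inv_eq_mul]
  ring

lemma aux_T1 (p q μ : ℂ) : w1 p q (μ - Complex.I) = w1 p (q + p + 1 / 2) μ := by
  unfold w1
  rw [aux_theta_shift, aux_theta_shift, aux_theta_shift, aux_thetaQ_shift,
    show (1 / 2 + 0 + 1 / 2 : ℂ) = 0 + 1 by norm_num, aux_theta_q1,
    show q + 1 / 2 + p + 1 / 2 = q + p + 1 / 2 + 1 / 2 by ring]
  have h := Complex.exp_ne_zero (-(Real.pi : ℂ) * Complex.I * (p * (p + 1)))
  generalize Complex.exp (-(Real.pi : ℂ) * Complex.I * (p * (p + 1))) = c at *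
  simp only [zero_mul, mul_zero, zero_add, Complex.exp_zero, one_mul]
  rw [mul_left_comm _ c, mul_left_comm _ c, mul_div_mul_left _ _ h]
  ring

open Complex in
lemma aux_t2T (μ : ℂ) : theta (1 / 2) 0 (μ - I) =
    cexp (Real.pi * I * (1 / 2) * (1 / 2)) * theta (1 / 2) 0 μ := by
  rw [aux_theta_shift, show (0 + 1 / 2 + 1 / 2 : ℂ) = 0 + 1 by norm_num, aux_theta_q1, ← mul_assoc,
    ← Complex.exp_add]
  congr 2
  ring

open Complex in
lemma aux_T2 (p q μ : ℂ) : w2 p q (μ - I) = w3 p (q + p + 1 / 2) μ := by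
  unfold w2 w3
  rw [aux_t2T, aux_theta_shift 0, aux_theta_shift p, aux_thetaQ_shift,
    show (1 / 2 + 0 + 1 / 2 : ℂ) = 0 + 1 by norm_num, aux_theta_q1,
    show q + 1 / 2 + (p + 1 / 2) + 1 / 2 = q + p + 1 / 2 + 1 by ring, aux_thetaQ_q1]
  simp only [zero_mul, mul_zero, zero_add, Complex.exp_zero, one_mul]
  rw [← mul_assoc (cexp _) (cexp _) (theta _ _ _), ← div_div]
  congr 1
  rw [div_eq_iff (by simp [Complex.exp_ne_zero])]
  have e : I * cexp (Real.pi * I * (1 / 2) * (1 / 2)) *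
      cexp (-Real.pi * I * ((p + 1 / 2) * (p + 1 / 2 + 1))) *
      cexp (2 * Real.pi * I * (p + 1 / 2)) = - (cexp (Real.pi * I * p) *
      cexp (-Real.pi * I * (p * (p + 1)))) := by
    have h : cexp (Real.pi * I * (1 / 2)) * cexp (Real.pi * I * (1 / 2) * (1 / 2)) *
        cexp (-Real.pi * I * ((p + 1 / 2) * (p + 1 / 2 + 1))) *
        cexp (2 * Real.pi * I * (p + 1 / 2)) = cexp (Real.pi * I) * (cexp (Real.pi * I * p) *
        cexp (-Real.pi * I * (p * (p + 1)))) := by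
      simp only [← Complex.exp_add]
      congr 1
      ring
    rw [aux_expI, Complex.exp_pi_mul_I] at h
    rw [h]; ring
  linear_combination (1 / 2 * theta (1 / 2) 0 μ * theta 0 0 μ *
    thetaQ (p + 1 / 2) (q + p + 1 / 2) μ) * e

open Complex in
lemma aux_T3 (p q μ : ℂ) : w3 p q (μ - I) = w2 p (q + p + 1 / 2) μ := by
  unfold w2 w3
  rw [aux_t2T, aux_theta_shift 0, aux_theta_shift p, aux_thetaQ_shift,
    show q + (p + 1 / 2) + 1 / 2 = q + p + 1 / 2 + 1 / 2 by ring]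
  simp only [zero_mul, mul_zero, zero_add, Complex.exp_zero, one_mul]
  rw [← div_div, ← div_div]
  congr 1
  rw [div_eq_div_iff (by simp [Complex.exp_ne_zero]) (by simp [Complex.exp_ne_zero])]
  have e : cexp (Real.pi * I * (1 / 2) * (1 / 2)) *
      cexp (-Real.pi * I * ((p + 1 / 2) * (p + 1 / 2 + 1))) *
      cexp (Real.pi * I * p) = - (I * cexp (-Real.pi * I * (p * (p + 1)))) := by
    have h : cexp (Real.pi * I) * (cexp (Real.pi * I * (1 / 2) * (1 / 2)) *
        cexp (-Real.pi * I * ((p + 1 / 2) * (p + 1 / 2 + 1))) *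
        cexp (Real.pi * I * p)) = cexp (Real.pi * I * (1 / 2)) *
        cexp (-Real.pi * I * (p * (p + 1))) := by
      simp only [← Complex.exp_add]
      congr 1
      ring
    rw [aux_expI, Complex.exp_pi_mul_I] at h
    rw [← h]; ring
  linear_combination (-1 / 2 * theta (1 / 2) 0 μ * theta 0 (1 / 2) μ *
    thetaQ (p + 1 / 2) (q + p + 1 / 2 + 1 / 2) μ) * e

lemma aux_TF (Λ p q μ : ℂ) : Ftwo Λ p q (μ - Complex.I) = Ftwo Λ p (q + p + 1 / 2) μ := by
  unfold Ftwo
  rw [aux_theta_shift, aux_thetaQ_shift, mul_div_mul_left _ _ (Complex.exp_ne_zero _)]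

lemma aux_shift (f g : ℂ → ℂ) (a : ℂ) (h : ∀ x, f (x - a) = g x) (x : ℂ) :
    deriv f (x - a) = deriv g x ∧ iteratedDeriv 2 f (x - a) = iteratedDeriv 2 g x := by
  have : g = fun x => f (x - a) := by funext x; exact (h x).symm
  subst this
  have h1 : deriv (fun x => f (x - a)) = fun x => deriv f (x - a) := by
    funext y; exact deriv_comp_sub_const ..
  refine ⟨by rw [h1], ?_⟩
  rw [iteratedDeriv_succ, iteratedDeriv_one, iteratedDeriv_succ, iteratedDeriv_one, h1]
  exact (deriv_comp_sub_const ..).symm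

/-- Modular transformation properties of the Seeley–de Witt coefficient `ã₂[p,q]`
of the two-parametric family under `iμ ↦ iμ+1` and `iμ ↦ i/μ`. -/
theorem statement17 (Λ : ℂ) (hΛ : Λ ≠ 0) (p q μ : ℂ) (hμ : 0 < μ.re)
    (hθ : ∀ ν : ℂ, 0 < ν.re → theta p q ν ≠ 0)
    (hθq : ∀ ν : ℂ, 0 < ν.re → thetaQ p q ν ≠ 0) :
    a2two Λ p q (μ - Complex.I) = a2two Λ p (q + p + 1 / 2) μ ∧
    (w1 (-q) p μ ≠ 0 → w2 (-q) p μ ≠ 0 → w3 (-q) p μ ≠ 0 → Ftwo Λ (-q) p μ ≠ 0 →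
      a2two Λ p q (1 / μ) = -μ ^ 2 * a2two Λ (-q) p μ) := by
  have hμ0 : μ ≠ 0 := by rintro rfl; simp at hμ
  constructor
  · obtain ⟨a1, b1⟩ := aux_shift _ _ _ (aux_T1 p q) μ
    obtain ⟨a2, b2⟩ := aux_shift _ _ _ (aux_T2 p q) μ
    obtain ⟨a3, b3⟩ := aux_shift _ _ _ (aux_T3 p q) μ
    obtain ⟨a4, b4⟩ := aux_shift _ _ _ (aux_TF Λ p q) μ
    unfold a2two
    rw [a1, a2, a3, a4, b1, b2, b3, b4, aux_T1, aux_T2, aux_T3, aux_TF]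
    ring
  · intro n1 n2 n3 nF
    have ht : ∀ x : ℂ, 0 < x.re → theta (-q) p x ≠ 0 := by
      intro x hx h0
      have := aux_theta_S p q x⁻¹ (aux_inv_re hx)
      rw [inv_inv, h0, mul_zero] at this
      exact hθ _ (aux_inv_re hx) this
    have htq : ∀ x : ℂ, 0 < x.re → thetaQ (-q) p x ≠ 0 := by
      intro x hx h0
      have := aux_thetaQ_S p q x⁻¹ (aux_inv_re hx)
      rw [inv_inv, h0, mul_zero] at this
      exact hθq _ (aux_inv_re hx) this
    have d1 : DifferentiableOn ℂ (w1 (-q) p) {x | 0 < x.re} := by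
      refine DifferentiableOn.div ((((aux_diff_theta _ _).const_mul _).mul
        (aux_diff_theta _ _)).mul (aux_diff_thetaQ _ _)) ((aux_diff_theta _ _).const_mul _) ?_
      intro x hx
      exact mul_ne_zero (Complex.exp_ne_zero _) (ht x hx)
    have d2 : DifferentiableOn ℂ (w2 (-q) p) {x | 0 < x.re} := by
      refine DifferentiableOn.div ((((aux_diff_theta _ _).const_mul _).mul
        (aux_diff_theta _ _)).mul (aux_diff_thetaQ _ _)) ((aux_diff_theta _ _).const_mul _) ?_
      intro x hx
      exact mul_ne_zero (Complex.exp_ne_zero _) (ht x hx)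
    have d3 : DifferentiableOn ℂ (w3 (-q) p) {x | 0 < x.re} := by
      refine DifferentiableOn.div ((((aux_diff_theta _ _).const_mul _).mul
        (aux_diff_theta _ _)).mul (aux_diff_thetaQ _ _)) (aux_diff_theta _ _) ?_
      intro x hx
      exact ht x hx
    have dF : DifferentiableOn ℂ (Ftwo Λ (-q) p) {x | 0 < x.re} := by
      refine DifferentiableOn.const_mul (DifferentiableOn.pow (DifferentiableOn.div
        (aux_diff_theta _ _) (aux_diff_thetaQ _ _) ?_) 2) _
      intro x hx
      exact htq x hx
    have hm : 0 < (1 / μ).re := by simpa using aux_inv_re hμ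
    have e : (1 / μ)⁻¹ = μ := by simp
    obtain ⟨a1, b1⟩ := aux_calc_w _ _ _ d3 (aux_S1 p q) μ hμ
    obtain ⟨a2, b2⟩ := aux_calc_w _ _ _ d2 (aux_S2 p q) μ hμ
    obtain ⟨a3, b3⟩ := aux_calc_w _ _ _ d1 (aux_S3 p q) μ hμ
    obtain ⟨a4, b4⟩ := aux_calc_F _ _ dF (aux_SF Λ p q) μ hμ
    unfold a2two
    rw [a1, a2, a3, a4, b1, b2, b3, b4, aux_S1 _ _ _ hm, aux_S2 _ _ _ hm, aux_S3 _ _ _ hm,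
      aux_SF _ _ _ _ hm, e]
    generalize deriv (w1 (-q) p) μ = A1
    generalize deriv (w2 (-q) p) μ = A2
    generalize deriv (w3 (-q) p) μ = A3
    generalize deriv (Ftwo Λ (-q) p) μ = A4
    generalize iteratedDeriv 2 (w1 (-q) p) μ = B1
    generalize iteratedDeriv 2 (w2 (-q) p) μ = B2
    generalize iteratedDeriv 2 (w3 (-q) p) μ = B3
    generalize iteratedDeriv 2 (Ftwo Λ (-q) p) μ = B4
    generalize w1 (-q) p μ = W1 at *
    generalize w2 (-q) p μ = W2 at *
    generalize w3 (-q) p μ = W3 at *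
    generalize Ftwo Λ (-q) p μ = G at *
    field_simp
    ring

end
end
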